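/- The multiplication on the formal graph algebra is associative: for all graphs Γ₁, Γ₂, Γ₃, Γ' of genus g with n legs, Σ_Γ c'_{Γ₁,Γ₂,Γ} · c'_{Γ,Γ₃,Γ'} = Σ_Δ c'_{Γ₂,Γ₃,Δ} · c'_{Γ₁,Δ,Γ'}, where both sums run over a set of representatives of the isomorphism classes of graphs of genus g with n legs (only finitely many terms are nonzero). Both sides equal the number of ordered partitions E(Γ') = E₁ ⊔ E₂ ⊔ E₃ into three parts such that Γ'/(E₂ ∪ E₃) ≅ Γ₁, Γ'/(E₁ ∪ E₃) ≅ Γ₂, and Γ'/(E₁ ∪ E₂) ≅ Γ₃. -/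

import Mathlib

/-!
Graphs with legs (connected finite multigraphs given by half-edge data),
genus-labeled graphs, contractions, isomorphisms and the structure constants
of the formal graph algebra, following Pixton, "Generalized boundary strata classes".
-/

open scoped BigOperators

/-- A *graph with `n` legs*: a connected finite multigraph given by a finite set `H` of
half-edges, a vertex map `vtx : H → V`, and an involution `inv : H → H` whose fixed
points are exactly the `n` labeled legs. -/
structure LegGraph (n : ℕ) : Type 1 where
  /-- half-edges -/
  H : Type
  /-- vertices -/
  V : Type
  finH : Finite H
  finV : Finite V
  /-- the vertex at which a half-edge lies -/
  vtx : H → V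
  /-- the involution pairing the two halves of each edge -/
  inv : H → H
  inv_inv : ∀ h, inv (inv h) = h
  /-- the legs, an enumeration of the fixed points of `inv` -/
  leg : Fin n → H
  leg_fix : ∀ i, inv (leg i) = leg i
  leg_inj : Function.Injective leg
  leg_all : ∀ h, inv h = h → ∃ i, leg i = h
  nonemptyV : Nonempty V
  /-- connectivity -/
  conn : ∀ v w : V,
    Relation.ReflTransGen (fun a b => ∃ h, vtx h = a ∧ vtx (inv h) = b) v w

namespace LegGraph

variable {n : ℕ}

/-- The set of half-edges belonging to actual edges (non-fixed points of the involution). -/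
def edgeHalves (Γ : LegGraph n) : Set Γ.H := {h | Γ.inv h ≠ h}

/-- The number of edges `|E(Γ)|`: half the number of non-fixed half-edges. -/
noncomputable def edgeCount (Γ : LegGraph n) : ℕ := Nat.card Γ.edgeHalves / 2

/-- A subset `E' ⊆ E(Γ)` of the edges, encoded as the (involution-invariant) set of the
half-edges of those edges. -/
def IsEdgeSet (Γ : LegGraph n) (S : Set Γ.H) : Prop :=
  S ⊆ Γ.edgeHalves ∧ ∀ h ∈ S, Γ.inv h ∈ S

/-- The number of edges in an edge subset. -/
noncomputable def setCount (Γ : LegGraph n) (S : Set Γ.H) : ℕ := Nat.card S / 2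

/-- The valence `n_v` of a vertex: the number of half-edges at it. -/
noncomputable def valence (Γ : LegGraph n) (v : Γ.V) : ℕ := Nat.card {h : Γ.H // Γ.vtx h = v}

/-- The relation on vertices given by the edges in `S`. -/
def contrRel (Γ : LegGraph n) (S : Set Γ.H) : Γ.V → Γ.V → Prop :=
  fun a b => ∃ h ∈ S, Γ.vtx h = a ∧ Γ.vtx (Γ.inv h) = b

/-- The setoid identifying the two endpoints of every edge of `S`. -/
def contrSetoid (Γ : LegGraph n) (S : Set Γ.H) : Setoid Γ.V :=
  Relation.EqvGen.setoid (Γ.contrRel S)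

/-- The vertices of the contraction `Γ/S`. -/
def CVert (Γ : LegGraph n) (S : Set Γ.H) : Type := Quotient (Γ.contrSetoid S)

/-- The vertex of `Γ/S` into which a vertex of `Γ` is identified. -/
def cls (Γ : LegGraph n) (S : Set Γ.H) (v : Γ.V) : Γ.CVert S :=
  Quotient.mk (Γ.contrSetoid S) v

/-- The set of vertices of `Γ` identified into a given vertex of `Γ/S`. -/
def classSet (Γ : LegGraph n) (S : Set Γ.H) (c : Γ.CVert S) : Set Γ.V :=
  {v | Γ.cls S v = c}

/-- The number of contracted edges collapsed into a given vertex of `Γ/S`. -/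
noncomputable def classEdges (Γ : LegGraph n) (S : Set Γ.H) (c : Γ.CVert S) : ℕ :=
  Nat.card {h : Γ.H // h ∈ S ∧ Γ.cls S (Γ.vtx h) = c} / 2

/-- The number of edges of the contraction `Γ/S`. -/
noncomputable def cEdgeCount (Γ : LegGraph n) (S : Set Γ.H) : ℕ :=
  Nat.card {h : Γ.H // Γ.inv h ≠ h ∧ h ∉ S} / 2

/-- The valence of a vertex of the contraction `Γ/S`. -/
noncomputable def cValence (Γ : LegGraph n) (S : Set Γ.H) (c : Γ.CVert S) : ℕ :=
  Nat.card {h : Γ.H // h ∉ S ∧ Γ.cls S (Γ.vtx h) = c}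

end LegGraph

/-- A *graph of genus `g` with `n` legs*: a graph with `n` legs together with a genus
`gen v` at each vertex, satisfying `g = h₁(Γ) + Σ_v gen v` where
`h₁(Γ) = |E(Γ)| - |V(Γ)| + 1` (stated additively to avoid truncated subtraction). -/
structure GenusGraph (g n : ℕ) extends LegGraph n where
  /-- the genus of each vertex -/
  gen : V → ℕ
  gen_eq : g + Nat.card V = toLegGraph.edgeCount + 1 + ∑ᶠ v, gen v

namespace GenusGraph

variable {g n : ℕ}

/-- The genus of a vertex of the contraction `Γ/S`: the sum of the genera of the vertices
of `Γ` identified into it, plus the number of independent cycles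
(#edges - #vertices + 1) of the collapsed subgraph. -/
noncomputable def cGen (Γ : GenusGraph g n) (S : Set Γ.H) (c : Γ.toLegGraph.CVert S) : ℕ :=
  (∑ᶠ v ∈ Γ.toLegGraph.classSet S c, Γ.gen v) +
    (Γ.toLegGraph.classEdges S c + 1 - Nat.card (Γ.toLegGraph.classSet S c))

end GenusGraph

/-- An isomorphism of graphs with `n` legs: compatible bijections of half-edges and
vertices commuting with the vertex maps and involutions and preserving the leg labels. -/
structure LegGraph.Iso {n : ℕ} (Γ₁ Γ₂ : LegGraph n) where
  eH : Γ₁.H ≃ Γ₂.H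
  eV : Γ₁.V ≃ Γ₂.V
  vtx_comm : ∀ h, Γ₂.vtx (eH h) = eV (Γ₁.vtx h)
  inv_comm : ∀ h, Γ₂.inv (eH h) = eH (Γ₁.inv h)
  leg_comm : ∀ i, eH (Γ₁.leg i) = Γ₂.leg i

/-- An isomorphism of graphs of genus `g` with `n` legs: an isomorphism of the underlying
graphs with legs which also preserves the vertex genera. -/
structure GenusGraph.Iso {g n : ℕ} (Γ₁ Γ₂ : GenusGraph g n) extends
    LegGraph.Iso Γ₁.toLegGraph Γ₂.toLegGraph where
  gen_comm : ∀ v, Γ₂.gen (eV v) = Γ₁.gen v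

/-- An isomorphism from the contraction `Γ/S` (where `S` is the half-edge set of a set of
edges of `Γ`) to a graph `Γ'` with `n` legs. -/
structure LegGraph.CIso {n : ℕ} (Γ : LegGraph n) (S : Set Γ.H) (Γ' : LegGraph n) where
  eH : {h : Γ.H // h ∉ S} ≃ Γ'.H
  eV : Γ.CVert S ≃ Γ'.V
  vtx_comm : ∀ h, Γ'.vtx (eH h) = eV (Γ.cls S (Γ.vtx h.1))
  inv_comm : ∀ (h : {h : Γ.H // h ∉ S}) (hh : Γ.inv h.1 ∉ S),
    Γ'.inv (eH h) = eH ⟨Γ.inv h.1, hh⟩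
  leg_comm : ∀ (i : Fin n) (hi : Γ.leg i ∉ S), eH ⟨Γ.leg i, hi⟩ = Γ'.leg i

/-- An isomorphism of graphs of genus `g` with `n` legs from the contraction `Γ/S` to `Γ'`:
an isomorphism of the underlying contracted graph which carries the combined genera of
`Γ/S` to the genera of `Γ'`. -/
structure GenusGraph.CIso {g n : ℕ} (Γ : GenusGraph g n) (S : Set Γ.H)
    (Γ' : GenusGraph g n) extends
    LegGraph.CIso Γ.toLegGraph S Γ'.toLegGraph where
  gen_comm : ∀ c, Γ'.gen (eV c) = Γ.cGen S c

/-- The structure constant `c_{Γ₁,Γ₂,Γ}`: the number of quadruples `(E₁, E₂, φ₁, φ₂)` where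
`E(Γ) = E₁ ⊔ E₂` is an ordered partition of the edges (recorded by the half-edge set `S`
of `E₁`, with `E₂` the complementary set of edges) and `φᵢ : Γ/Eᵢ ≅ Γᵢ` are isomorphisms
of graphs of genus `g` with `n` legs. -/
noncomputable def GenusGraph.c {g n : ℕ} (Γ₁ Γ₂ Γ : GenusGraph g n) : ℕ :=
  Nat.card (Σ S : {S : Set Γ.H // Γ.toLegGraph.IsEdgeSet S},
    Γ.CIso S.1 Γ₁ × Γ.CIso (Γ.toLegGraph.edgeHalves \ S.1) Γ₂)

/-- The rescaled structure constant `c'_{Γ₁,Γ₂,Γ}`: the number of ordered partitions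
`E(Γ) = E₁ ⊔ E₂` of the edges such that `Γ/E₁ ≅ Γ₁` and `Γ/E₂ ≅ Γ₂`. -/
noncomputable def GenusGraph.c' {g n : ℕ} (Γ₁ Γ₂ Γ : GenusGraph g n) : ℕ :=
  Nat.card {S : Set Γ.H // Γ.toLegGraph.IsEdgeSet S ∧
    Nonempty (Γ.CIso S Γ₁) ∧ Nonempty (Γ.CIso (Γ.toLegGraph.edgeHalves \ S) Γ₂)}

/-- The order `|Aut(Γ)|` of the automorphism group of a graph of genus `g` with `n` legs. -/
noncomputable def GenusGraph.autCard {g n : ℕ} (Γ : GenusGraph g n) : ℕ :=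
  Nat.card (Γ.Iso Γ)

/-!
The number `2 g_v - 2 + n_v`, the degree of the log canonical bundle of a curve of genus `g_v` with
`n_v` marked points, is additive under contraction: its value at a vertex of `Γ/S` is the sum of its
values at the vertices identified into it. It determines the genus of a vertex of known valence, and
its sum over all vertices of a graph of genus `g` with `n` legs is `2 g - 2 + n`. Hence `Γ/S` is
again a graph of genus `g`, and contracting in two steps gives the same graph as contracting once.

Consequently, if `Γ'/T ≅ Δ`, the partitions `E(Δ) = S₁ ⊔ S₂` correspond to the partitions
`E(Γ') = E₁ ⊔ E₂ ⊔ T`, so that `c'_{Γ₁,Γ₂,Δ} · c'_{Δ,Γ₃,Γ'}` counts the partitions into three parts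
with `Γ'/E₃ ≅ Δ`. Summing over `Δ` removes this last condition, and what is left is invariant under
cyclic rotation.
-/

section Fiberwise

variable {α β M : Type*} [Finite α]

theorem finsum_mem_fiberwise [AddCommMonoid M] (q : α → β) (I : Set β) (f : α → M) :
    ∑ᶠ b ∈ I, ∑ᶠ a ∈ q ⁻¹' {b}, f a = ∑ᶠ a ∈ q ⁻¹' I, f a := by
  have support_subset : Function.support (fun b => ∑ᶠ a ∈ q ⁻¹' {b}, f a) ⊆ Set.range q := by
    intro b hb
    obtain ⟨a, ha, -⟩ := exists_ne_zero_of_finsum_mem_ne_zero hb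
    exact ⟨a, ha⟩
  calc ∑ᶠ b ∈ I, ∑ᶠ a ∈ q ⁻¹' {b}, f a
      = ∑ᶠ b ∈ I ∩ Set.range q, ∑ᶠ a ∈ q ⁻¹' {b}, f a :=
        finsum_mem_inter_support_eq _ _ _ (by
          rw [Set.inter_assoc, Set.inter_eq_right.2 support_subset])
    _ = ∑ᶠ a ∈ ⋃ b ∈ I ∩ Set.range q, q ⁻¹' {b}, f a :=
        (finsum_mem_biUnion (fun _ _ _ _ hbc => (Set.disjoint_singleton.2 hbc).preimage q)
          ((Set.finite_range q).inter_of_right I) fun _ _ => Set.toFinite _).symm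
    _ = ∑ᶠ a ∈ q ⁻¹' I, f a := by
        rw [← Set.preimage_iUnion₂, Set.biUnion_of_singleton, Set.preimage_inter_range]

theorem finsum_mem_ncard_fiber (q : α → β) (I : Set β) :
    ∑ᶠ b ∈ I, (q ⁻¹' {b}).ncard = (q ⁻¹' I).ncard := by
  simp only [← finsum_one, finsum_mem_fiberwise]

theorem finite_support_ncard_fiber (q : α → β) :
    (Function.support fun b => (q ⁻¹' {b}).ncard).Finite := by
  refine (Set.finite_range q).subset fun b hb => ?_
  obtain ⟨a, ha⟩ := Set.nonempty_of_ncard_ne_zero hb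
  exact ⟨a, ha⟩

end Fiberwise

namespace LegGraph

variable {n : ℕ}

instance (Γ : LegGraph n) : Finite Γ.H := Γ.finH

instance (Γ : LegGraph n) : Finite Γ.V := Γ.finV

instance (Γ : LegGraph n) (S : Set Γ.H) : Finite (Γ.CVert S) :=
  inferInstanceAs (Finite (Quotient (Γ.contrSetoid S)))

section EdgeSet

variable {Γ : LegGraph n} {S T : Set Γ.H} {h : Γ.H}

theorem IsEdgeSet.inv_mem_iff (hS : Γ.IsEdgeSet S) : Γ.inv h ∈ S ↔ h ∈ S :=
  ⟨fun hh => Γ.inv_inv h ▸ hS.2 _ hh, hS.2 h⟩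

theorem IsEdgeSet.inv_notMem (hS : Γ.IsEdgeSet S) (hh : h ∉ S) : Γ.inv h ∉ S :=
  mt hS.inv_mem_iff.1 hh

theorem IsEdgeSet.leg_notMem (hS : Γ.IsEdgeSet S) (i : Fin n) : Γ.leg i ∉ S :=
  fun hi => hS.1 hi (Γ.leg_fix i)

theorem isEdgeSet_edgeHalves (Γ : LegGraph n) : Γ.IsEdgeSet Γ.edgeHalves :=
  ⟨subset_rfl, fun h hh hfix => hh (hfix.symm.trans (Γ.inv_inv h))⟩

theorem IsEdgeSet.union (hS : Γ.IsEdgeSet S) (hT : Γ.IsEdgeSet T) : Γ.IsEdgeSet (S ∪ T) :=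
  ⟨Set.union_subset hS.1 hT.1, fun h hh => hh.imp (hS.2 h) (hT.2 h)⟩

theorem IsEdgeSet.compl (hS : Γ.IsEdgeSet S) : Γ.IsEdgeSet (Γ.edgeHalves \ S) :=
  ⟨Set.sdiff_subset, fun h hh => ⟨Γ.isEdgeSet_edgeHalves.2 h hh.1, hS.inv_notMem hh.2⟩⟩

theorem IsEdgeSet.compl_compl (hS : Γ.IsEdgeSet S) : Γ.edgeHalves \ (Γ.edgeHalves \ S) = S :=
  Set.sdiff_sdiff_cancel_left hS.1

theorem IsEdgeSet.compl_union_union_right (hT : Γ.IsEdgeSet T) (hST : Disjoint S T) :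
    Γ.edgeHalves \ (S ∪ T) ∪ T = Γ.edgeHalves \ S := by
  rw [← Set.sdiff_sdiff, Set.sdiff_union_of_subset (Set.subset_sdiff.2 ⟨hT.1, hST.symm⟩)]

theorem IsEdgeSet.two_mul_setCount (hS : Γ.IsEdgeSet S) : 2 * Γ.setCount S = S.ncard := by
  classical
  have := Fintype.ofFinite S
  let invS : S → S := fun h => ⟨Γ.inv h, hS.2 h h.2⟩
  have invS_invS : Function.Involutive invS := fun h => Subtype.ext (Γ.inv_inv h)
  have support_eq : invS_invS.toPerm.support = Finset.univ :=
    Finset.eq_univ_iff_forall.2 fun h =>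
      Equiv.Perm.mem_support.2 fun hfix => hS.1 h.2 (congrArg Subtype.val hfix)
  have two_dvd := Equiv.Perm.two_dvd_card_support (σ := invS_invS.toPerm)
    (Equiv.ext invS_invS)
  rw [support_eq, Finset.card_univ, ← Nat.card_eq_fintype_card] at two_dvd
  exact Nat.mul_div_cancel' two_dvd

theorem card_H_eq (Γ : LegGraph n) : Nat.card Γ.H = n + 2 * Γ.edgeCount := by
  have compl_eq : Γ.edgeHalvesᶜ = Set.range Γ.leg := by
    ext h
    simp only [edgeHalves, Set.mem_compl_iff, Set.mem_ofPred_eq, not_not, Set.mem_range]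
    exact ⟨Γ.leg_all h, fun ⟨i, hi⟩ => hi ▸ Γ.leg_fix i⟩
  have card_legs : (Set.range Γ.leg).ncard = n := by
    rw [← Set.image_univ, Set.ncard_image_of_injective _ Γ.leg_inj, Set.ncard_univ,
      Nat.card_fin]
  rw [← Set.ncard_add_ncard_compl Γ.edgeHalves, compl_eq, card_legs,
    ← Γ.isEdgeSet_edgeHalves.two_mul_setCount, add_comm]
  rfl

end EdgeSet

section Contraction

variable (Γ : LegGraph n) {S : Set Γ.H}

theorem cls_surjective (S : Set Γ.H) : Function.Surjective (Γ.cls S) :=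
  Quotient.mk_surjective

theorem cls_vtx_inv {h : Γ.H} (hh : h ∈ S) :
    Γ.cls S (Γ.vtx (Γ.inv h)) = Γ.cls S (Γ.vtx h) :=
  (Quotient.sound (Relation.EqvGen.rel _ _ ⟨h, hh, rfl, rfl⟩)).symm

/-- The universal property of the vertex set of `Γ/S`: a function on the vertices of `Γ` that takes
the same value at both ends of every edge of `S` descends to the vertices of `Γ/S`. -/
def liftCVert {X : Type*} (f : Γ.V → X) (hf : ∀ h ∈ S, f (Γ.vtx (Γ.inv h)) = f (Γ.vtx h)) :
    Γ.CVert S → X :=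
  Quotient.lift f fun _ _ hvw => by
    induction hvw with
    | rel _ _ hr => obtain ⟨h, hh, rfl, rfl⟩ := hr; exact (hf h hh).symm
    | refl _ => rfl
    | symm _ _ _ ih => exact ih.symm
    | trans _ _ _ _ _ ih₁ ih₂ => exact ih₁.trans ih₂

@[simp]
theorem liftCVert_cls {X : Type*} (f : Γ.V → X)
    (hf : ∀ h ∈ S, f (Γ.vtx (Γ.inv h)) = f (Γ.vtx h)) (v : Γ.V) :
    Γ.liftCVert f hf (Γ.cls S v) = f v :=
  rfl

/-- The simple graph on the vertices of `Γ` in which distinct vertices are adjacent when an edge of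
`S` joins them. Its connected components are the vertices of `Γ/S`. -/
def contrGraph (S : Set Γ.H) : SimpleGraph Γ.V :=
  SimpleGraph.fromRel (Γ.contrRel S)

theorem reachable_contrGraph_iff {v w : Γ.V} :
    (Γ.contrGraph S).Reachable v w ↔ Γ.cls S v = Γ.cls S w := by
  constructor
  · rintro ⟨p⟩
    induction p with
    | nil => rfl
    | cons hadj _ ih =>
      obtain ⟨-, ⟨h, hh, rfl, rfl⟩ | ⟨h, hh, rfl, rfl⟩⟩ := hadj
      · exact (Γ.cls_vtx_inv hh).symm.trans ih
      · exact (Γ.cls_vtx_inv hh).trans ih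
  · intro hvw
    have mk_vtx_inv : ∀ h ∈ S, (Γ.contrGraph S).connectedComponentMk (Γ.vtx (Γ.inv h)) =
        (Γ.contrGraph S).connectedComponentMk (Γ.vtx h) := by
      intro h hh
      by_cases hloop : Γ.vtx (Γ.inv h) = Γ.vtx h
      · rw [hloop]
      · exact SimpleGraph.ConnectedComponent.connectedComponentMk_eq_of_adj
          ⟨hloop, .inr ⟨h, hh, rfl, rfl⟩⟩
    exact SimpleGraph.ConnectedComponent.exact
      (congrArg (Γ.liftCVert (Γ.contrGraph S).connectedComponentMk mk_vtx_inv) hvw)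

theorem supp_connectedComponentMk_contrGraph (v : Γ.V) :
    ((Γ.contrGraph S).connectedComponentMk v).supp = Γ.classSet S (Γ.cls S v) := by
  ext w
  rw [SimpleGraph.ConnectedComponent.mem_supp_iff, SimpleGraph.ConnectedComponent.eq,
    reachable_contrGraph_iff]
  rfl

theorem connected_induce_contrGraph (c : Γ.CVert S) :
    ((Γ.contrGraph S).induce (Γ.classSet S c)).Connected := by
  obtain ⟨v, rfl⟩ := Γ.cls_surjective S c
  rw [← supp_connectedComponentMk_contrGraph]
  exact SimpleGraph.ConnectedComponent.connected_toSimpleGraph _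

variable {Γ}

theorem IsEdgeSet.exists_half_of_contrGraph_adj (hS : Γ.IsEdgeSet S) {v w : Γ.V}
    (hvw : (Γ.contrGraph S).Adj v w) : ∃ h ∈ S, Γ.vtx h = v ∧ Γ.vtx (Γ.inv h) = w := by
  obtain ⟨-, hr | ⟨h, hh, hw, hv⟩⟩ := hvw
  · exact hr
  · exact ⟨Γ.inv h, hS.2 h hh, hv, by rw [Γ.inv_inv, hw]⟩

theorem IsEdgeSet.two_mul_classEdges (hS : Γ.IsEdgeSet S) (c : Γ.CVert S) :
    2 * Γ.classEdges S c = {h | h ∈ S ∧ Γ.cls S (Γ.vtx h) = c}.ncard := by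
  refine IsEdgeSet.two_mul_setCount ⟨fun h hh => hS.1 hh.1, fun h hh => ⟨hS.2 h hh.1, ?_⟩⟩
  rw [Γ.cls_vtx_inv hh.1, hh.2]

theorem IsEdgeSet.card_dart_le (hS : Γ.IsEdgeSet S) (c : Γ.CVert S) :
    Nat.card ((Γ.contrGraph S).induce (Γ.classSet S c)).Dart ≤ 2 * Γ.classEdges S c := by
  rw [hS.two_mul_classEdges]
  choose half half_mem vtx_half vtx_inv_half using
    fun d : ((Γ.contrGraph S).induce (Γ.classSet S c)).Dart =>
      hS.exists_half_of_contrGraph_adj d.adj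
  refine Nat.card_le_card_of_injective
    (fun d => (⟨half d, half_mem d, by rw [vtx_half]; exact d.fst.2⟩ :
      {h | h ∈ S ∧ Γ.cls S (Γ.vtx h) = c})) fun d e hde => ?_
  have half_eq : half d = half e := congrArg Subtype.val hde
  refine SimpleGraph.Dart.ext _ _ (Prod.ext (Subtype.ext ?_) (Subtype.ext ?_))
  · exact (vtx_half d).symm.trans (half_eq ▸ vtx_half e)
  · exact (vtx_inv_half d).symm.trans (half_eq ▸ vtx_inv_half e)

theorem IsEdgeSet.ncard_classSet_le (hS : Γ.IsEdgeSet S) (c : Γ.CVert S) :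
    (Γ.classSet S c).ncard ≤ Γ.classEdges S c + 1 := by
  classical
  have := Fintype.ofFinite (Γ.classSet S c)
  have card_vert_le := (Γ.connected_induce_contrGraph c).card_vert_le_card_edgeSet_add_one
  have card_dart_le := hS.card_dart_le c
  rw [Nat.card_eq_fintype_card, SimpleGraph.dart_card_eq_twice_card_edges,
    SimpleGraph.edgeFinset_card, ← Nat.card_eq_fintype_card] at card_dart_le
  rw [← Nat.card_coe_set_eq]
  lia

end Contraction

section Contract

variable (Γ : LegGraph n) (S : Set Γ.H) (hS : Γ.IsEdgeSet S)

/-- The contraction `Γ/S` as a graph with `n` legs. -/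
abbrev contract : LegGraph n where
  H := {h : Γ.H // h ∉ S}
  V := Γ.CVert S
  finH := inferInstance
  finV := inferInstance
  vtx h := Γ.cls S (Γ.vtx h)
  inv h := ⟨Γ.inv h, hS.inv_notMem h.2⟩
  inv_inv h := Subtype.ext (Γ.inv_inv h)
  leg i := ⟨Γ.leg i, hS.leg_notMem i⟩
  leg_fix i := Subtype.ext (Γ.leg_fix i)
  leg_inj _ _ hij := Γ.leg_inj (congrArg Subtype.val hij)
  leg_all h hh := (Γ.leg_all h (congrArg Subtype.val hh)).imp fun _ hi => Subtype.ext hi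
  nonemptyV := Γ.nonemptyV.map (Γ.cls S)
  conn c d := by
    obtain ⟨v, rfl⟩ := Γ.cls_surjective S c
    obtain ⟨w, rfl⟩ := Γ.cls_surjective S d
    induction Γ.conn v w with
    | refl => exact .refl
    | tail _ hstep ih =>
      obtain ⟨h, rfl, rfl⟩ := hstep
      by_cases hh : h ∈ S
      · rwa [Γ.cls_vtx_inv hh]
      · exact ih.tail ⟨⟨h, hh⟩, rfl, rfl⟩

theorem valence_contract (c : Γ.CVert S) : (Γ.contract S hS).valence c = Γ.cValence S c :=
  Nat.card_congr (Equiv.subtypeSubtypeEquivSubtypeInter (· ∉ S) fun h => Γ.cls S (Γ.vtx h) = c)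

variable {Γ S} in
theorem IsEdgeSet.ncard_preimage_classSet (hS : Γ.IsEdgeSet S) (c : Γ.CVert S) :
    (Γ.vtx ⁻¹' Γ.classSet S c).ncard = 2 * Γ.classEdges S c + Γ.cValence S c := by
  rw [hS.two_mul_classEdges, ← Set.ncard_inter_add_ncard_sdiff_eq_ncard _ S]
  congr 1
  · exact congrArg Set.ncard (Set.inter_comm _ _)
  · exact congrArg Set.ncard (Set.ext fun _ => and_comm)

end Contract

section LogDegree

variable (Γ : LegGraph n) (gen : Γ.V → ℕ)

/-- The degree `2 g_v - 2 + n_v` of the log canonical bundle of a curve of genus `g_v` with `n_v`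
marked points, where `n_v` is the valence of `v`. The genera are a separate argument, so that it can
be used for `Γ/S` before this is known to be a graph of genus `g`. -/
noncomputable def logDegree (v : Γ.V) : ℤ :=
  2 * gen v - 2 + Γ.valence v

theorem finsum_mem_logDegree (s : Set Γ.V) :
    ∑ᶠ v ∈ s, Γ.logDegree gen v =
      2 * ((∑ᶠ v ∈ s, gen v : ℕ) : ℤ) - 2 * s.ncard + (Γ.vtx ⁻¹' s).ncard := by
  have sum_valence : ∑ᶠ v ∈ s, Γ.valence v = (Γ.vtx ⁻¹' s).ncard :=
    finsum_mem_ncard_fiber Γ.vtx s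
  have hs : s.Finite := s.toFinite
  rw [← sum_valence, ← finsum_one]
  simp only [finsum_mem_eq_finite_toFinset_sum _ hs, logDegree, Nat.cast_sum, Finset.mul_sum,
    ← Finset.sum_sub_distrib, ← Finset.sum_add_distrib, Nat.cast_one, mul_one]

theorem genus_eq_iff_finsum_logDegree {g : ℕ} :
    g + Nat.card Γ.V = Γ.edgeCount + 1 + ∑ᶠ v, gen v ↔
      ∑ᶠ v, Γ.logDegree gen v = 2 * g - 2 + n := by
  have sum_univ := Γ.finsum_mem_logDegree gen Set.univ
  rw [finsum_mem_univ, finsum_mem_univ, Set.preimage_univ, Set.ncard_univ, Set.ncard_univ,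
    Γ.card_H_eq] at sum_univ
  rw [sum_univ]
  lia

end LogDegree

end LegGraph

namespace GenusGraph

variable {g n : ℕ} (Γ : GenusGraph g n) {S : Set Γ.H} (hS : Γ.toLegGraph.IsEdgeSet S)

theorem logDegree_contract (c : Γ.toLegGraph.CVert S) :
    (Γ.toLegGraph.contract S hS).logDegree (Γ.cGen S) c =
      ∑ᶠ v ∈ Γ.toLegGraph.classSet S c, Γ.toLegGraph.logDegree Γ.gen v := by
  have ncard_le := hS.ncard_classSet_le c
  rw [LegGraph.finsum_mem_logDegree, hS.ncard_preimage_classSet,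
    LegGraph.logDegree, LegGraph.valence_contract, cGen, Nat.card_coe_set_eq]
  lia

variable (S) in
/-- The contraction `Γ/S` as a graph of genus `g` with `n` legs. -/
noncomputable def contract : GenusGraph g n where
  toLegGraph := Γ.toLegGraph.contract S hS
  gen := Γ.cGen S
  gen_eq := by
    have sum_classes := finsum_mem_fiberwise (Γ.toLegGraph.cls S) Set.univ
      (Γ.toLegGraph.logDegree Γ.gen)
    rw [Set.preimage_univ, finsum_mem_univ, finsum_mem_univ] at sum_classes
    refine (LegGraph.genus_eq_iff_finsum_logDegree _ _).2 ?_
    rw [finsum_congr (Γ.logDegree_contract hS)]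
    exact sum_classes.trans ((LegGraph.genus_eq_iff_finsum_logDegree _ _).1 Γ.gen_eq)

end GenusGraph

namespace LegGraph

variable {n : ℕ}

namespace Iso

variable {Γ Δ Ξ : LegGraph n}

/-- The inverse of an isomorphism of graphs with `n` legs. -/
def symm (e : Γ.Iso Δ) : Δ.Iso Γ where
  eH := e.eH.symm
  eV := e.eV.symm
  vtx_comm h := e.eV.injective <| by rw [← e.vtx_comm, Equiv.apply_symm_apply,
    Equiv.apply_symm_apply]
  inv_comm h := e.eH.injective <| by rw [← e.inv_comm, Equiv.apply_symm_apply,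
    Equiv.apply_symm_apply]
  leg_comm i := by rw [← e.leg_comm, Equiv.symm_apply_apply]

/-- The composition of isomorphisms of graphs with `n` legs. -/
def trans (e : Γ.Iso Δ) (f : Δ.Iso Ξ) : Γ.Iso Ξ where
  eH := e.eH.trans f.eH
  eV := e.eV.trans f.eV
  vtx_comm h := (f.vtx_comm _).trans (congrArg f.eV (e.vtx_comm h))
  inv_comm h := (f.inv_comm _).trans (congrArg f.eH (e.inv_comm h))
  leg_comm i := (congrArg f.eH (e.leg_comm i)).trans (f.leg_comm i)

theorem valence_eV (e : Γ.Iso Δ) (v : Γ.V) : Δ.valence (e.eV v) = Γ.valence v :=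
  (Nat.card_congr (e.eH.subtypeEquiv fun h => by
    rw [e.vtx_comm, EmbeddingLike.apply_eq_iff_eq])).symm

theorem logDegree_eV_eq_iff (e : Γ.Iso Δ) {genΓ : Γ.V → ℕ} {genΔ : Δ.V → ℕ} {v : Γ.V} :
    Δ.logDegree genΔ (e.eV v) = Γ.logDegree genΓ v ↔ genΔ (e.eV v) = genΓ v := by
  rw [logDegree, logDegree, e.valence_eV]
  lia

end Iso

namespace CIso

variable {Γ Δ : LegGraph n} {T : Set Γ.H} (φ : Γ.CIso T Δ)

/-- The isomorphism from `Γ.contract T hT` given by a `CIso`. -/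
def toIso (hT : Γ.IsEdgeSet T) : (Γ.contract T hT).Iso Δ where
  eH := φ.eH
  eV := φ.eV
  vtx_comm := φ.vtx_comm
  inv_comm h := φ.inv_comm h (hT.inv_notMem h.2)
  leg_comm i := φ.leg_comm i (hT.leg_notMem i)

/-- The map `V(Γ) → V(Γ/T) ≅ V(Δ)`. -/
def vertexMap (v : Γ.V) : Δ.V :=
  φ.eV (Γ.cls T v)

theorem preimage_vertexMap_singleton (c : Γ.CVert T) :
    φ.vertexMap ⁻¹' {φ.eV c} = Γ.classSet T c :=
  Set.ext fun _ => φ.eV.apply_eq_iff_eq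

/-- The half-edges of `Γ` outside `T` corresponding to those in `S` under `Γ/T ≅ Δ`. -/
def pullback (S : Set Δ.H) : Set Γ.H :=
  Subtype.val '' (φ.eH ⁻¹' S)

variable {S : Set Δ.H}

theorem coe_mem_pullback_iff {h : {h : Γ.H // h ∉ T}} : (h : Γ.H) ∈ φ.pullback S ↔ φ.eH h ∈ S :=
  Subtype.val_injective.mem_set_image

theorem disjoint_pullback (S : Set Δ.H) : Disjoint T (φ.pullback S) :=
  Set.disjoint_right.2 (Set.forall_mem_image.2 fun h _ => h.2)

/-- Sets of half-edges of `Δ ≅ Γ/T` are sets of half-edges of `Γ` disjoint from `T`. -/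
def pullbackEquiv : Set Δ.H ≃ {B : Set Γ.H // Disjoint T B} where
  toFun S := ⟨φ.pullback S, φ.disjoint_pullback S⟩
  invFun B := {h | (φ.eH.symm h : Γ.H) ∈ B.1}
  left_inv S := by
    ext h
    rw [Set.mem_ofPred_eq, φ.coe_mem_pullback_iff, Equiv.apply_symm_apply]
  right_inv B := by
    ext h
    constructor
    · rintro ⟨h, hh, rfl⟩
      rwa [Set.mem_preimage, Set.mem_ofPred_eq, Equiv.symm_apply_apply] at hh
    · intro hh
      refine ⟨⟨h, Set.disjoint_right.1 B.2 hh⟩, ?_, rfl⟩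
      rwa [Set.mem_preimage, Set.mem_ofPred_eq, Equiv.symm_apply_apply]

theorem eH_mem_edgeHalves_iff (hT : Γ.IsEdgeSet T) {h : {h : Γ.H // h ∉ T}} :
    φ.eH h ∈ Δ.edgeHalves ↔ (h : Γ.H) ∈ Γ.edgeHalves := by
  refine not_congr ?_
  rw [φ.inv_comm h (hT.inv_notMem h.2), EmbeddingLike.apply_eq_iff_eq, Subtype.ext_iff]

theorem isEdgeSet_pullback_iff (hT : Γ.IsEdgeSet T) :
    Γ.IsEdgeSet (φ.pullback S) ↔ Δ.IsEdgeSet S := by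
  refine and_congr ?_ ?_
  · simp only [pullback, Set.image_subset_iff]
    rw [← φ.eH.surjective.preimage_subset_preimage_iff]
    exact forall₂_congr fun h _ => (φ.eH_mem_edgeHalves_iff hT).symm
  · simp only [φ.eH.surjective.forall]
    refine Set.forall_mem_image.trans (forall₂_congr fun h _ => ?_)
    rw [φ.inv_comm h (hT.inv_notMem h.2), ← coe_mem_pullback_iff]

theorem union_pullback_compl (hT : Γ.IsEdgeSet T) (S : Set Δ.H) :
    T ∪ φ.pullback (Δ.edgeHalves \ S) = Γ.edgeHalves \ φ.pullback S := by
  ext h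
  by_cases hh : h ∈ T
  · exact iff_of_true (.inl hh) ⟨hT.1 hh, Set.disjoint_left.1 (φ.disjoint_pullback S) hh⟩
  · lift h to {h : Γ.H // h ∉ T} using hh
    rw [Set.mem_union, or_iff_right h.2, Set.mem_sdiff, φ.coe_mem_pullback_iff,
      φ.coe_mem_pullback_iff, Set.mem_sdiff, φ.eH_mem_edgeHalves_iff hT]

theorem isEdgeSet_union_pullback (hT : Γ.IsEdgeSet T) (hS : Δ.IsEdgeSet S) :
    Γ.IsEdgeSet (T ∪ φ.pullback S) :=
  hT.union ((φ.isEdgeSet_pullback_iff hT).2 hS)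

/-- The bijection between the half-edges of `Γ/(T ∪ S)` and those of `(Γ/T)/S`. -/
def contractEquivH (S : Set Δ.H) : {h : Γ.H // h ∉ T ∪ φ.pullback S} ≃ {h : Δ.H // h ∉ S} :=
  calc {h : Γ.H // h ∉ T ∪ φ.pullback S}
    _ ≃ {h : Γ.H // h ∉ T ∧ h ∉ φ.pullback S} := Equiv.subtypeEquivRight fun _ => not_or
    _ ≃ {h : {h : Γ.H // h ∉ T} // (h : Γ.H) ∉ φ.pullback S} :=
      (Equiv.subtypeSubtypeEquivSubtypeInter (· ∉ T) (· ∉ φ.pullback S)).symm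
    _ ≃ {h : Δ.H // h ∉ S} := φ.eH.subtypeEquiv fun _ => not_congr φ.coe_mem_pullback_iff

theorem vertexMap_vtx (h : {h : Γ.H // h ∉ T}) : φ.vertexMap (Γ.vtx h) = Δ.vtx (φ.eH h) :=
  (φ.vtx_comm h).symm

theorem vertexMap_vtx_inv (hT : Γ.IsEdgeSet T) (h : {h : Γ.H // h ∉ T}) :
    φ.vertexMap (Γ.vtx (Γ.inv h)) = Δ.vtx (Δ.inv (φ.eH h)) := by
  rw [φ.inv_comm h (hT.inv_notMem h.2), ← vertexMap_vtx]

theorem cls_vertexMap_vtx_inv (hT : Γ.IsEdgeSet T) {h : Γ.H} (hh : h ∈ T ∪ φ.pullback S) :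
    Δ.cls S (φ.vertexMap (Γ.vtx (Γ.inv h))) = Δ.cls S (φ.vertexMap (Γ.vtx h)) := by
  obtain hh | ⟨h, hh, rfl⟩ := hh
  · exact congrArg (fun c => Δ.cls S (φ.eV c)) (Γ.cls_vtx_inv hh)
  · rw [φ.vertexMap_vtx_inv hT, φ.vertexMap_vtx, Δ.cls_vtx_inv (Set.mem_preimage.1 hh)]

/-- The map `V(Δ) ≅ V(Γ/T) → V(Γ/(T ∪ S))`. -/
def unionCls (S : Set Δ.H) (w : Δ.V) : Γ.CVert (T ∪ φ.pullback S) :=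
  Γ.liftCVert (Γ.cls _) (fun _ hh => Γ.cls_vtx_inv (.inl hh)) (φ.eV.symm w)

theorem unionCls_vertexMap (v : Γ.V) :
    φ.unionCls S (φ.vertexMap v) = Γ.cls (T ∪ φ.pullback S) v := by
  rw [unionCls, vertexMap, Equiv.symm_apply_apply, liftCVert_cls]

theorem unionCls_vtx_inv (hT : Γ.IsEdgeSet T) {h : Δ.H} (hh : h ∈ S) :
    φ.unionCls S (Δ.vtx (Δ.inv h)) = φ.unionCls S (Δ.vtx h) := by
  obtain ⟨h, rfl⟩ := φ.eH.surjective h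
  rw [← φ.vertexMap_vtx_inv hT, ← φ.vertexMap_vtx, unionCls_vertexMap, unionCls_vertexMap,
    Γ.cls_vtx_inv (.inr (φ.coe_mem_pullback_iff.2 hh))]

theorem vertexMap_surjective : Function.Surjective φ.vertexMap :=
  φ.eV.surjective.comp (Γ.cls_surjective T)

/-- The bijection between the vertices of `Γ/(T ∪ S)` and those of `(Γ/T)/S`. -/
def contractEquivV (hT : Γ.IsEdgeSet T) (S : Set Δ.H) :
    Γ.CVert (T ∪ φ.pullback S) ≃ Δ.CVert S where
  toFun := Γ.liftCVert (fun v => Δ.cls S (φ.vertexMap v)) fun _ => φ.cls_vertexMap_vtx_inv hT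
  invFun := Δ.liftCVert (φ.unionCls S) fun _ => φ.unionCls_vtx_inv hT
  left_inv c := by
    obtain ⟨v, rfl⟩ := Γ.cls_surjective _ c
    exact φ.unionCls_vertexMap v
  right_inv c := by
    obtain ⟨w, rfl⟩ := Δ.cls_surjective S c
    obtain ⟨v, rfl⟩ := φ.vertexMap_surjective w
    rw [liftCVert_cls, unionCls_vertexMap, liftCVert_cls]

theorem preimage_vertexMap_classSet (hT : Γ.IsEdgeSet T) (c : Γ.CVert (T ∪ φ.pullback S)) :
    φ.vertexMap ⁻¹' Δ.classSet S (φ.contractEquivV hT S c) =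
      Γ.classSet (T ∪ φ.pullback S) c := by
  ext v
  exact (φ.contractEquivV hT S).apply_eq_iff_eq (x := Γ.cls _ v)

/-- The isomorphism `Γ/(T ∪ S) ≅ (Γ/T)/S`, where `S` is a set of edges of `Δ ≅ Γ/T`. -/
def contractIso (hT : Γ.IsEdgeSet T) (hS : Δ.IsEdgeSet S) :
    (Γ.contract (T ∪ φ.pullback S) (φ.isEdgeSet_union_pullback hT hS)).Iso (Δ.contract S hS) where
  eH := φ.contractEquivH S
  eV := φ.contractEquivV hT S
  vtx_comm h := congrArg (Δ.cls S) (φ.vertexMap_vtx ⟨h.1, mt .inl h.2⟩).symm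
  inv_comm h := Subtype.ext (φ.inv_comm ⟨h.1, mt .inl h.2⟩ _)
  leg_comm i := Subtype.ext (φ.leg_comm i _)

end CIso

end LegGraph

namespace GenusGraph

variable {g n : ℕ}

section Isomorphism

variable {Γ Δ Ξ : GenusGraph g n}

/-- The inverse of an isomorphism of graphs of genus `g` with `n` legs. -/
def Iso.symm (e : Γ.Iso Δ) : Δ.Iso Γ where
  toIso := e.toIso.symm
  gen_comm w := by
    obtain ⟨v, rfl⟩ := e.eV.surjective w
    rw [e.gen_comm]
    exact congrArg Γ.gen (e.eV.symm_apply_apply v)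

/-- The composition of isomorphisms of graphs of genus `g` with `n` legs. -/
def Iso.trans (e : Γ.Iso Δ) (f : Δ.Iso Ξ) : Γ.Iso Ξ where
  toIso := e.toIso.trans f.toIso
  gen_comm v := (f.gen_comm _).trans (e.gen_comm v)

theorem nonempty_cIso_iff {S : Set Γ.H} (hS : Γ.toLegGraph.IsEdgeSet S) :
    Nonempty (Γ.CIso S Δ) ↔ Nonempty ((Γ.contract S hS).Iso Δ) :=
  ⟨fun ⟨φ⟩ => ⟨φ.toCIso.toIso hS, φ.gen_comm⟩,
    fun ⟨e⟩ => ⟨⟨e.eH, e.eV, e.vtx_comm, fun h _ => e.inv_comm h, fun i _ => e.leg_comm i⟩,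
      e.gen_comm⟩⟩

namespace CIso

variable {T : Set Γ.H} {S : Set Δ.H} (φ : Γ.CIso T Δ)

theorem logDegree_eq_finsum (hT : Γ.toLegGraph.IsEdgeSet T) (w : Δ.V) :
    Δ.toLegGraph.logDegree Δ.gen w =
      ∑ᶠ v ∈ φ.vertexMap ⁻¹' {w}, Γ.toLegGraph.logDegree Γ.gen v := by
  obtain ⟨c, rfl⟩ := φ.eV.surjective w
  rw [φ.preimage_vertexMap_singleton, ← Γ.logDegree_contract hT]
  exact (φ.toCIso.toIso hT).logDegree_eV_eq_iff.2 (φ.gen_comm c)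

/-- The isomorphism `Γ/(T ∪ S) ≅ (Γ/T)/S` as an isomorphism of graphs of genus `g`. -/
def contractIso (hT : Γ.toLegGraph.IsEdgeSet T) (hS : Δ.toLegGraph.IsEdgeSet S) :
    (Γ.contract (T ∪ φ.pullback S) (φ.isEdgeSet_union_pullback hT hS)).Iso (Δ.contract S hS) where
  toIso := φ.toCIso.contractIso hT hS
  gen_comm c := by
    refine (φ.toCIso.contractIso hT hS).logDegree_eV_eq_iff.1 ?_
    refine (Δ.logDegree_contract hS _).trans (Eq.trans ?_ (Γ.logDegree_contract _ c).symm)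
    simp only [φ.logDegree_eq_finsum hT, finsum_mem_fiberwise]
    rw [← φ.preimage_vertexMap_classSet hT c]
    rfl

theorem nonempty_cIso_union_pullback_iff (hT : Γ.toLegGraph.IsEdgeSet T)
    (hS : Δ.toLegGraph.IsEdgeSet S) :
    Nonempty (Γ.CIso (T ∪ φ.pullback S) Ξ) ↔ Nonempty (Δ.CIso S Ξ) := by
  rw [nonempty_cIso_iff (φ.isEdgeSet_union_pullback hT hS), nonempty_cIso_iff hS]
  exact ⟨fun ⟨e⟩ => ⟨(φ.contractIso hT hS).symm.trans e⟩,
    fun ⟨e⟩ => ⟨(φ.contractIso hT hS).trans e⟩⟩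

theorem c'_eq_card (φ : Γ.CIso T Δ) (hT : Γ.toLegGraph.IsEdgeSet T) (Γ₁ Γ₂ : GenusGraph g n) :
    c' Γ₁ Γ₂ Δ = Nat.card {B : Set Γ.H // Disjoint T B ∧ Γ.toLegGraph.IsEdgeSet B ∧
      Nonempty (Γ.CIso (T ∪ B) Γ₁) ∧ Nonempty (Γ.CIso (Γ.toLegGraph.edgeHalves \ B) Γ₂)} := by
  refine Nat.card_congr ((φ.pullbackEquiv.subtypeEquiv fun S => ?_).trans
    (Equiv.subtypeSubtypeEquivSubtypeInter _ _))
  rw [← φ.isEdgeSet_pullback_iff hT]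
  refine and_congr_right fun hpS => ?_
  have hS := (φ.isEdgeSet_pullback_iff hT).1 hpS
  rw [← φ.nonempty_cIso_union_pullback_iff hT hS, ← φ.nonempty_cIso_union_pullback_iff hT hS.compl,
    φ.union_pullback_compl hT]
  rfl

end CIso

end Isomorphism

section StructureConstants

variable (Γ₁ Γ₂ Γ₃ Δ Γ : GenusGraph g n)

theorem c'_comm : c' Γ₁ Γ₂ Γ = c' Γ₂ Γ₁ Γ := by
  have card_le (Γ₁ Γ₂ : GenusGraph g n) : c' Γ₁ Γ₂ Γ ≤ c' Γ₂ Γ₁ Γ := by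
    refine Nat.card_le_card_of_injective (fun S => ⟨Γ.toLegGraph.edgeHalves \ S.1, S.2.1.compl,
      S.2.2.2, by rw [S.2.1.compl_compl]; exact S.2.2.1⟩) fun S T hST => Subtype.ext ?_
    have compl_eq : Γ.toLegGraph.edgeHalves \ S.1 = Γ.toLegGraph.edgeHalves \ T.1 :=
      congrArg Subtype.val hST
    rw [← S.2.1.compl_compl, compl_eq, T.2.1.compl_compl]
  exact (card_le Γ₁ Γ₂).antisymm (card_le Γ₂ Γ₁)

/-- The ordered partitions `E(Γ) = E₁ ⊔ E₂ ⊔ E₃` such that contracting the complement of `Eᵢ` gives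
`Γᵢ`. Only the half-edge sets of `E₁` and `E₂` are recorded. -/
def tripartitions : Set (Set Γ.H × Set Γ.H) :=
  {p | Γ.toLegGraph.IsEdgeSet p.1 ∧ Γ.toLegGraph.IsEdgeSet p.2 ∧ Disjoint p.1 p.2 ∧
    Nonempty (Γ.CIso (Γ.toLegGraph.edgeHalves \ p.1) Γ₁) ∧
    Nonempty (Γ.CIso (Γ.toLegGraph.edgeHalves \ p.2) Γ₂) ∧
    Nonempty (Γ.CIso (p.1 ∪ p.2) Γ₃)}

theorem ncard_tripartitions_le_rotate :
    (tripartitions Γ₁ Γ₂ Γ₃ Γ).ncard ≤ (tripartitions Γ₂ Γ₃ Γ₁ Γ).ncard := by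
  refine Set.ncard_le_ncard_of_injOn (fun p => (p.2, Γ.toLegGraph.edgeHalves \ (p.1 ∪ p.2))) ?_ ?_
  · rintro ⟨A, B⟩ ⟨hA, hB, hAB, h₁, h₂, h₃⟩
    refine ⟨hB, (hA.union hB).compl, Set.disjoint_sdiff_right.mono_left Set.subset_union_right, h₂,
      ?_, ?_⟩
    · rwa [(hA.union hB).compl_compl]
    · rwa [Set.union_comm, hB.compl_union_union_right hAB]
  · refine Set.LeftInvOn.injOn (f₁' := fun q => (Γ.toLegGraph.edgeHalves \ (q.2 ∪ q.1), q.1)) ?_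
    rintro ⟨A, B⟩ ⟨hA, hB, hAB, -⟩
    simp only [hB.compl_union_union_right hAB, hA.compl_compl]

theorem ncard_tripartitions_rotate :
    (tripartitions Γ₂ Γ₃ Γ₁ Γ).ncard = (tripartitions Γ₁ Γ₂ Γ₃ Γ).ncard :=
  ((ncard_tripartitions_le_rotate Γ₂ Γ₃ Γ₁ Γ).trans
    (ncard_tripartitions_le_rotate Γ₃ Γ₁ Γ₂ Γ)).antisymm (ncard_tripartitions_le_rotate Γ₁ Γ₂ Γ₃ Γ)

theorem c'_mul_c' :
    c' Γ₁ Γ₂ Δ * c' Δ Γ₃ Γ =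
      Nat.card {p : tripartitions Γ₂ Γ₃ Γ₁ Γ // Nonempty (Γ.CIso p.1.2 Δ)} := by
  let Outer := {T : Set Γ.H // Γ.toLegGraph.IsEdgeSet T ∧ Nonempty (Γ.CIso T Δ) ∧
    Nonempty (Γ.CIso (Γ.toLegGraph.edgeHalves \ T) Γ₃)}
  let Inner (T : Set Γ.H) := {B : Set Γ.H // Disjoint T B ∧ Γ.toLegGraph.IsEdgeSet B ∧
    Nonempty (Γ.CIso (T ∪ B) Γ₁) ∧ Nonempty (Γ.CIso (Γ.toLegGraph.edgeHalves \ B) Γ₂)}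
  have card_inner (T : Outer) : Nat.card (Inner T.1) = c' Γ₁ Γ₂ Δ :=
    (T.2.2.1.some.c'_eq_card T.2.1 Γ₁ Γ₂).symm
  let e : (Σ T : Outer, Inner T.1) ≃
      {p : tripartitions Γ₂ Γ₃ Γ₁ Γ // Nonempty (Γ.CIso p.1.2 Δ)} :=
    { toFun := fun ⟨⟨T, hT, hTΔ, hT₃⟩, ⟨B, hTB, hB, h₁, hB₂⟩⟩ =>
        ⟨⟨(B, T), hB, hT, hTB.symm, hB₂, hT₃, Set.union_comm T B ▸ h₁⟩, hTΔ⟩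
      invFun := fun ⟨⟨⟨B, T⟩, hB, hT, hBT, hB₂, hT₃, h₁⟩, hTΔ⟩ =>
        ⟨⟨T, hT, hTΔ, hT₃⟩, ⟨B, hBT.symm, hB, Set.union_comm B T ▸ h₁, hB₂⟩⟩
      left_inv := fun ⟨⟨_, _, _, _⟩, ⟨_, _, _, _, _⟩⟩ => rfl
      right_inv := fun ⟨⟨_, _, _, _, _, _, _⟩, _⟩ => rfl }
  have := Fintype.ofFinite Outer
  rw [← Nat.card_congr e, Nat.card_sigma, Finset.sum_congr rfl fun T _ => card_inner T,
    Finset.sum_const, Finset.card_univ, ← Nat.card_eq_fintype_card, smul_eq_mul, mul_comm]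
  rfl

variable {ι : Type*} {reps : ι → GenusGraph g n}

theorem existsUnique_cIso_reps
    (hreps : ∀ Δ : GenusGraph g n, ∃! i, Nonempty (Δ.Iso (reps i)))
    {Γ : GenusGraph g n} {S : Set Γ.H} (hS : Γ.toLegGraph.IsEdgeSet S) :
    ∃! i, Nonempty (Γ.CIso S (reps i)) := by
  simpa only [nonempty_cIso_iff hS] using hreps (Γ.contract S hS)

theorem exists_ncard_fiber_eq_c'_mul_c'
    (hreps : ∀ Δ : GenusGraph g n, ∃! i, Nonempty (Δ.Iso (reps i))) :
    ∃ q : tripartitions Γ₂ Γ₃ Γ₁ Γ → ι,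
      ∀ i, c' Γ₁ Γ₂ (reps i) * c' (reps i) Γ₃ Γ = (q ⁻¹' {i}).ncard := by
  choose q hq q_unique using fun p : tripartitions Γ₂ Γ₃ Γ₁ Γ =>
    existsUnique_cIso_reps hreps p.2.2.1
  refine ⟨q, fun i => (c'_mul_c' Γ₁ Γ₂ Γ₃ (reps i) Γ).trans ?_⟩
  refine Nat.card_congr (Equiv.subtypeEquivRight fun p => ⟨fun hp => ?_, ?_⟩)
  · exact (q_unique p i hp).symm
  · rintro rfl
    exact hq p

theorem finite_support_c'_mul_c'
    (hreps : ∀ Δ : GenusGraph g n, ∃! i, Nonempty (Δ.Iso (reps i))) :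
    {i | c' Γ₁ Γ₂ (reps i) * c' (reps i) Γ₃ Γ ≠ 0}.Finite := by
  obtain ⟨q, hq⟩ := exists_ncard_fiber_eq_c'_mul_c' Γ₁ Γ₂ Γ₃ Γ hreps
  simp only [hq]
  exact finite_support_ncard_fiber q

theorem finsum_c'_mul_c'
    (hreps : ∀ Δ : GenusGraph g n, ∃! i, Nonempty (Δ.Iso (reps i))) :
    ∑ᶠ i, c' Γ₁ Γ₂ (reps i) * c' (reps i) Γ₃ Γ = (tripartitions Γ₁ Γ₂ Γ₃ Γ).ncard := by
  obtain ⟨q, hq⟩ := exists_ncard_fiber_eq_c'_mul_c' Γ₁ Γ₂ Γ₃ Γ hreps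
  have sum_fibers := finsum_mem_ncard_fiber q Set.univ
  rw [finsum_mem_univ, Set.preimage_univ, Set.ncard_univ] at sum_fibers
  rw [finsum_congr hq, sum_fibers, Nat.card_coe_set_eq, ncard_tripartitions_rotate]

end StructureConstants

end GenusGraph

/-- The multiplication on the formal graph algebra is associative: for all
graphs `Γ₁, Γ₂, Γ₃, Γ'` of genus `g` with `n` legs and any family `reps` containing exactly
one representative of each isomorphism class of graphs of genus `g` with `n` legs,
`Σ_Γ c'_{Γ₁,Γ₂,Γ} · c'_{Γ,Γ₃,Γ'} = Σ_Δ c'_{Γ₂,Γ₃,Δ} · c'_{Γ₁,Δ,Γ'}` (both sums having only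
finitely many nonzero terms), and both sides equal the number of ordered partitions
`E(Γ') = E₁ ⊔ E₂ ⊔ E₃` such that `Γ'/(E₂ ∪ E₃) ≅ Γ₁`, `Γ'/(E₁ ∪ E₃) ≅ Γ₂` and
`Γ'/(E₁ ∪ E₂) ≅ Γ₃` (the partition being recorded by the disjoint half-edge sets of `E₁`
and `E₂`, with `E₃` the complementary set of edges). -/
theorem formal_graph_algebra_assoc (g n : ℕ) {ι : Type} (reps : ι → GenusGraph g n)
    (hreps : ∀ Δ : GenusGraph g n, ∃! i : ι, Nonempty (Δ.Iso (reps i)))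
    (Γ₁ Γ₂ Γ₃ Γ' : GenusGraph g n) :
    {i : ι | GenusGraph.c' Γ₁ Γ₂ (reps i) * GenusGraph.c' (reps i) Γ₃ Γ' ≠ 0}.Finite ∧
    {i : ι | GenusGraph.c' Γ₂ Γ₃ (reps i) * GenusGraph.c' Γ₁ (reps i) Γ' ≠ 0}.Finite ∧
    (∑ᶠ i : ι, GenusGraph.c' Γ₁ Γ₂ (reps i) * GenusGraph.c' (reps i) Γ₃ Γ') =
      (∑ᶠ i : ι, GenusGraph.c' Γ₂ Γ₃ (reps i) * GenusGraph.c' Γ₁ (reps i) Γ') ∧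
    (∑ᶠ i : ι, GenusGraph.c' Γ₁ Γ₂ (reps i) * GenusGraph.c' (reps i) Γ₃ Γ') =
      Nat.card {p : Set Γ'.H × Set Γ'.H //
        Γ'.toLegGraph.IsEdgeSet p.1 ∧ Γ'.toLegGraph.IsEdgeSet p.2 ∧ Disjoint p.1 p.2 ∧
        Nonempty (Γ'.CIso (Γ'.toLegGraph.edgeHalves \ p.1) Γ₁) ∧
        Nonempty (Γ'.CIso (Γ'.toLegGraph.edgeHalves \ p.2) Γ₂) ∧
        Nonempty (Γ'.CIso (p.1 ∪ p.2) Γ₃)} := by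
  simp only [GenusGraph.c'_comm Γ₁ _ Γ']
  refine ⟨GenusGraph.finite_support_c'_mul_c' Γ₁ Γ₂ Γ₃ Γ' hreps,
    GenusGraph.finite_support_c'_mul_c' Γ₂ Γ₃ Γ₁ Γ' hreps, ?_,
    GenusGraph.finsum_c'_mul_c' Γ₁ Γ₂ Γ₃ Γ' hreps⟩
  rw [GenusGraph.finsum_c'_mul_c' Γ₁ Γ₂ Γ₃ Γ' hreps, GenusGraph.finsum_c'_mul_c' Γ₂ Γ₃ Γ₁ Γ' hreps,
    GenusGraph.ncard_tripartitions_rotate Γ₁ Γ₂ Γ₃]
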